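/- arXiv:1706.06922 — 3 statements merged into one kernel-verified Lean document; each statement's English description precedes it below -/
import Mathlib

section
/- Fix an integer a ≥ 4 and set ℓ = 2^a, k = 100·ℓ·a + 1, d = ℓ + 400·ℓ²·a, and fix a real ε with 0 < ε < 1/2. Consider items that are k-element subsets u of Fin d, with weight vector w_u(i) = 1 − ε if i ∈ u and w_u(i) = 0 otherwise. There exists a finitely supported probability mass function μ on instances (lists of k-element subsets of Fin d) such that: (i) every list l in the support of μ satisfies OPT(l) ≥ ℓ; and (ii) for every deterministic online algorithm with free disposal A, the expectation ∑' l, μ(l) · |A(l)| ≤ 6. (Since ℓ = Θ(k / log k), by Yao's principle this shows that no randomized algorithm has competitive ratio o(k / log k) for instances with slack ε, even for the utility function f(S) = |S|.) -/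
open scoped BigOperators ENNReal

/-- The weight of the item at position `p` of the list `l` on dimension `i`
(zero if `p` is out of range). -/
def weightAt {Item : Type*} {d : ℕ} (w : Item → Fin d → ℝ) (l : List Item)
    (p : ℕ) (i : Fin d) : ℝ :=
  (l[p]?.map fun u => w u i).getD 0

/-- A finite set of positions `P` is feasible for the instance `l` if all positions are
valid indices and on every dimension the total weight is at most `1`. -/
def Feasible {Item : Type*} {d : ℕ} (w : Item → Fin d → ℝ) (l : List Item)
    (P : Finset ℕ) : Prop :=
  (∀ p ∈ P, p < l.length) ∧ ∀ i : Fin d, ∑ p ∈ P, weightAt w l p i ≤ 1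

/-- `OPT w l` is the maximum cardinality of a feasible set of positions for `l`. -/
noncomputable def OPT {Item : Type*} {d : ℕ} (w : Item → Fin d → ℝ) (l : List Item) : ℕ :=
  sSup {n | ∃ P : Finset ℕ, Feasible w l P ∧ P.card = n}

/-- A deterministic online algorithm with free disposal. -/
structure OnlineAlg {Item : Type*} {d : ℕ} (w : Item → Fin d → ℝ) where
  A : List Item → Finset ℕ
  online : ∀ (l : List Item) (u : Item), A (l ++ [u]) ⊆ A l ∪ {l.length}
  feasible : ∀ l : List Item, Feasible w l (A l)

/-- Weight vectors of items that are `k`-element subsets of `Fin d`: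
weight `1 - ε` on each dimension of the subset, `0` elsewhere. -/
noncomputable def Wslack (d k : ℕ) (ε : ℝ)
    (u : {u : Finset (Fin d) // u.card = k}) (i : Fin d) : ℝ :=
  if i ∈ u.val then 1 - ε else 0

/-!
The adversary hides a uniformly random word `s` with `n` letters from an alphabet of size `m`, and
releases the items in `n` phases of `m` items each, one item per letter. Items of the same phase
exclude each other, and an item of phase `i` whose letter is not `s i` excludes every later item,
so all but at most one of the items kept at the end carry the hidden letter of their phase. The
items released up to phase `i` depend only on the letters of `s` before `i`, so an algorithm, which
can keep only one item of phase `i`, keeps the one carrying the hidden letter with probability at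
most `1 / m`. Hence at most `n / m + 1` items are kept on average, while the `n` items carrying the
hidden letters fit together.

Such items are built by writing letters as words of `b` bits. For two phases `i < j` and a bit `t`
there are two slots, one for each value of the bit. Item `c` of phase `i` occupies the slots given
by its own bits, and every item of phase `j` occupies the slots given by the complements of the bits
of `s i`: the two share no slot exactly when `c = s i`.
-/

theorem tsum_map_mul {α β : Type*} (p : PMF α) (g : α → β) (f : β → ℝ≥0∞) :
    ∑' b, p.map g b * f b = ∑' a, p a * f (g a) := by
  simp only [PMF.map_apply, ← ENNReal.tsum_mul_right]
  rw [ENNReal.tsum_comm]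
  refine tsum_congr fun a => ?_
  rw [tsum_eq_single (g a) fun b hb => by rw [if_neg hb, zero_mul], if_pos rfl]

section Feasibility

variable {Item : Type*} {d : ℕ} {w : Item → Fin d → ℝ} {l : List Item} {P : Finset ℕ}

theorem weightAt_of_getElem? {p : ℕ} {u : Item} (hu : l[p]? = some u) (x : Fin d) :
    weightAt w l p x = w u x := by
  simp only [weightAt, hu, Option.map_some, Option.getD_some]

theorem weightAt_nonneg (hw : ∀ u x, 0 ≤ w u x) (p : ℕ) (x : Fin d) : 0 ≤ weightAt w l p x := by
  unfold weightAt
  cases l[p]? with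
  | none => exact le_rfl
  | some u => exact hw u x

/-- Two items conflict if together they exceed the capacity of some dimension. -/
def Conflict (w : Item → Fin d → ℝ) (u v : Item) : Prop :=
  ∃ x, 1 < w u x + w v x

theorem Conflict.symm {u v : Item} (h : Conflict w u v) : Conflict w v u :=
  h.imp fun x hx => by rwa [add_comm]

theorem Feasible.eq_of_conflict (hP : Feasible w l P) (hw : ∀ u x, 0 ≤ w u x) {p q : ℕ}
    (hp : p ∈ P) (hq : q ∈ P) {u v : Item} (hu : l[p]? = some u) (hv : l[q]? = some v)
    (huv : Conflict w u v) : p = q := by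
  by_contra hpq
  obtain ⟨x, hx⟩ := huv
  refine hx.not_ge ?_
  calc w u x + w v x = ∑ r ∈ {p, q}, weightAt w l r x := by
        rw [Finset.sum_pair hpq, weightAt_of_getElem? hu, weightAt_of_getElem? hv]
    _ ≤ ∑ r ∈ P, weightAt w l r x :=
        Finset.sum_le_sum_of_subset_of_nonneg (Finset.insert_subset hp (by simpa using hq))
          fun r _ _ => weightAt_nonneg hw r x
    _ ≤ 1 := hP.2 x

theorem Feasible.subset_range (hP : Feasible w l P) : P ⊆ Finset.range l.length :=
  fun p hp => Finset.mem_range.2 (hP.1 p hp)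

theorem Feasible.card_le_OPT (hP : Feasible w l P) : P.card ≤ OPT w l := by
  refine le_csSup ⟨l.length, ?_⟩ ⟨P, hP, rfl⟩
  rintro _ ⟨Q, hQ, rfl⟩
  simpa only [Finset.card_range] using Finset.card_le_card hQ.subset_range

theorem OnlineAlg.mem_of_mem_append (alg : OnlineAlg w) {l l' : List Item} {p : ℕ}
    (hp : p < l.length) (h : p ∈ alg.A (l ++ l')) : p ∈ alg.A l := by
  induction l' using List.reverseRecOn with
  | nil => rwa [List.append_nil] at h
  | append_singleton t u ih =>
    rw [← List.append_assoc] at h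
    rcases Finset.mem_union.1 (alg.online _ _ h) with h | h
    · exact ih h
    · rw [Finset.mem_singleton, List.length_append] at h
      omega

theorem OnlineAlg.mem_take_of_mem (alg : OnlineAlg w) {N p : ℕ} (hpN : p < N)
    (h : p ∈ alg.A l) : p ∈ alg.A (l.take N) := by
  have hpl : p < l.length := (alg.feasible l).1 p h
  rw [← List.take_append_drop N l] at h
  exact alg.mem_of_mem_append (by rw [List.length_take]; exact lt_min hpN hpl) h

end Feasibility

section Position

variable {n m : ℕ}

/-- The position of item `c` of phase `i` in an instance made of `n` phases of `m` items each. -/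
def position (i : Fin n) (c : Fin m) : ℕ :=
  finProdFinEquiv (i, c)

theorem position_lt (i : Fin n) (c : Fin m) : position i c < n * m :=
  (finProdFinEquiv (i, c)).isLt

theorem position_inj {i i' : Fin n} {c c' : Fin m} :
    position i c = position i' c' ↔ i = i' ∧ c = c' := by
  rw [position, position, Fin.val_inj, finProdFinEquiv.apply_eq_iff_eq, Prod.mk.injEq]

theorem exists_position_eq {p : ℕ} (hp : p < n * m) :
    ∃ (i : Fin n) (c : Fin m), position i c = p :=
  ⟨_, _, congrArg Fin.val (finProdFinEquiv.apply_symm_apply ⟨p, hp⟩)⟩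

theorem position_lt_mul_succ_iff {i j : Fin n} {c : Fin m} :
    position j c < m * (i + 1) ↔ j ≤ i := by
  have hpos : position j c = c + m * j := rfl
  rw [hpos, ← Fin.val_fin_le]
  constructor
  · intro h
    by_contra! hij
    have : m * (i + 1) ≤ m * j := Nat.mul_le_mul_left m hij
    omega
  · intro h
    have := Nat.mul_le_mul_left m h
    have := c.isLt
    rw [Nat.mul_succ]
    omega

end Position

/-- The abstract hard instances: for each hidden word `s`, an item `item s i c` for every phase `i`
and letter `c`, released phase by phase. The items of phase `i` depend only on the letters of `s`
before `i`, items of one phase conflict, items missing the hidden letter of their phase conflict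
with all later ones, and the items carrying the hidden letters fit together. -/
structure HiddenWordFamily {Item : Type*} {d : ℕ} (w : Item → Fin d → ℝ) (n m : ℕ) where
  item : (Fin n → Fin m) → Fin n → Fin m → Item
  item_congr : ∀ {s s' i}, (∀ j < i, s j = s' j) → ∀ c, item s i c = item s' i c
  conflict_of_ne : ∀ s i {c c'}, c ≠ c' → Conflict w (item s i c) (item s i c')
  conflict_of_lt : ∀ s {i j c}, i < j → c ≠ s i → ∀ c', Conflict w (item s i c) (item s j c')
  sum_secret_le_one : ∀ s x, ∑ i, w (item s i (s i)) x ≤ 1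

namespace HiddenWordFamily

variable {Item : Type*} {d n m : ℕ} {w : Item → Fin d → ℝ} (F : HiddenWordFamily w n m)

/-- The instance with hidden word `s`. -/
def toList (s : Fin n → Fin m) : List Item :=
  List.ofFn fun q : Fin (n * m) => F.item s (finProdFinEquiv.symm q).1 (finProdFinEquiv.symm q).2

theorem length_toList (s : Fin n → Fin m) : (F.toList s).length = n * m :=
  List.length_ofFn

theorem getElem?_toList (s : Fin n → Fin m) (i : Fin n) (c : Fin m) :
    (F.toList s)[position i c]? = some (F.item s i c) := by
  have hq : (⟨position i c, position_lt i c⟩ : Fin (n * m)) = finProdFinEquiv (i, c) := rfl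
  rw [toList, List.getElem?_ofFn, dif_pos (position_lt i c), hq, Equiv.symm_apply_apply]

theorem take_toList_congr {s s' : Fin n → Fin m} {i : Fin n} (h : ∀ j < i, s j = s' j) :
    (F.toList s).take (m * (i + 1)) = (F.toList s').take (m * (i + 1)) := by
  refine List.ext_getElem? fun p => ?_
  have hi : m * (i + 1) ≤ n * m := by rw [mul_comm n]; exact Nat.mul_le_mul_left m i.isLt
  rcases lt_or_ge p (m * (i + 1)) with hp | hp
  · obtain ⟨j, c, rfl⟩ := exists_position_eq (hp.trans_le hi)
    have hji : j ≤ i := position_lt_mul_succ_iff.1 hp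
    rw [List.getElem?_take_of_lt hp, List.getElem?_take_of_lt hp, F.getElem?_toList,
      F.getElem?_toList, F.item_congr fun j' hj' => h j' (hj'.trans_le hji)]
  · rw [List.getElem?_take_eq_none hp, List.getElem?_take_eq_none hp]

/-- The position of the item of phase `i` that carries the hidden letter. -/
def secretPosition (s : Fin n → Fin m) : Fin n ↪ ℕ where
  toFun i := position i (s i)
  inj' _ _ h := (position_inj.1 h).1

theorem feasible_map_secretPosition (s : Fin n → Fin m) :
    Feasible w (F.toList s) (Finset.univ.map (secretPosition s)) := by
  constructor
  · intro p hp
    obtain ⟨i, -, rfl⟩ := Finset.mem_map.1 hp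
    rw [F.length_toList]
    exact position_lt i (s i)
  · intro x
    rw [Finset.sum_map]
    refine (Finset.sum_congr rfl fun i _ => ?_).trans_le (F.sum_secret_le_one s x)
    exact weightAt_of_getElem? (F.getElem?_toList s i (s i)) x

theorem le_OPT (s : Fin n → Fin m) : n ≤ OPT w (F.toList s) := by
  simpa only [Finset.card_map, Finset.card_univ, Fintype.card_fin] using
    (F.feasible_map_secretPosition s).card_le_OPT

theorem conflict_of_ne_secret (s : Fin n → Fin m) {i j : Fin n} {c c' : Fin m}
    (hc : c ≠ s i) (hc' : c' ≠ s j) (hne : (i, c) ≠ (j, c')) :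
    Conflict w (F.item s i c) (F.item s j c') := by
  rcases lt_trichotomy i j with hij | rfl | hji
  · exact F.conflict_of_lt s hij hc c'
  · exact F.conflict_of_ne s i fun h => hne (by rw [h])
  · exact (F.conflict_of_lt s hji hc' c).symm

variable (alg : OnlineAlg w)

/-- The phases whose item carrying the hidden letter is kept by `alg` at the end of the instance
with hidden word `s`. -/
def guessedPhases (s : Fin n → Fin m) : Finset (Fin n) :=
  {i | secretPosition s i ∈ alg.A (F.toList s)}

theorem mem_guessedPhases {s : Fin n → Fin m} {i : Fin n} :
    i ∈ F.guessedPhases alg s ↔ position i (s i) ∈ alg.A (F.toList s) :=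
  Finset.mem_filter_univ i

variable {alg}

theorem letter_eq_of_mem_guessedPhases (hw : ∀ u x, 0 ≤ w u x) {s s' : Fin n → Fin m} {i : Fin n}
    (h : ∀ j < i, s j = s' j) (hs : i ∈ F.guessedPhases alg s)
    (hs' : i ∈ F.guessedPhases alg s') : s i = s' i := by
  by_contra hne
  have hlt (c : Fin m) : position i c < m * (i + 1) := position_lt_mul_succ_iff.2 le_rfl
  have hget (c : Fin m) :
      ((F.toList s).take (m * (i + 1)))[position i c]? = some (F.item s i c) := by
    rw [List.getElem?_take_of_lt (hlt c), F.getElem?_toList]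
  have hmem := alg.mem_take_of_mem (hlt _) ((F.mem_guessedPhases alg).1 hs)
  have hmem' := alg.mem_take_of_mem (hlt _) ((F.mem_guessedPhases alg).1 hs')
  rw [← F.take_toList_congr h] at hmem'
  have hpos := (alg.feasible _).eq_of_conflict hw hmem hmem' (hget _) (hget _)
    (F.conflict_of_ne s i hne)
  exact hne (position_inj.1 hpos).2

variable (alg)

theorem card_le_card_guessedPhases_add_one (hw : ∀ u x, 0 ≤ w u x) (s : Fin n → Fin m) :
    (alg.A (F.toList s)).card ≤ (F.guessedPhases alg s).card + 1 := by
  set S := alg.A (F.toList s)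
  set G := (F.guessedPhases alg s).map (secretPosition s)
  have hnotMem {i c} (hmem : position i c ∈ S) (hnot : position i c ∉ G) : c ≠ s i := by
    rintro rfl
    exact hnot (Finset.mem_map_of_mem (secretPosition s) ((F.mem_guessedPhases alg).2 hmem))
  have hfew : (S \ G).card ≤ 1 := by
    refine Finset.card_le_one.2 fun p hp q hq => ?_
    rw [Finset.mem_sdiff] at hp hq
    have hlt {p} (hp : p ∈ S) : p < n * m := F.length_toList s ▸ (alg.feasible _).1 p hp
    obtain ⟨i, c, rfl⟩ := exists_position_eq (hlt hp.1)
    obtain ⟨j, c', rfl⟩ := exists_position_eq (hlt hq.1)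
    by_contra hne
    have hconflict := F.conflict_of_ne_secret s (hnotMem hp.1 hp.2) (hnotMem hq.1 hq.2)
      fun h => hne (position_inj.2 (Prod.mk.inj h))
    exact hne ((alg.feasible _).eq_of_conflict hw hp.1 hq.1 (F.getElem?_toList s i c)
      (F.getElem?_toList s j c') hconflict)
  calc S.card ≤ (S \ G).card + G.card := Finset.card_le_card_sdiff_add_card
    _ ≤ (F.guessedPhases alg s).card + 1 := by rw [Finset.card_map]; omega

theorem card_filter_mem_guessedPhases_mul_le (hw : ∀ u x, 0 ≤ w u x) (i : Fin n) :
    Finset.card {s | i ∈ F.guessedPhases alg s} * m ≤ Fintype.card (Fin n → Fin m) := by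
  -- Overwriting letter `i` of such a word loses nothing: the guess of the algorithm recovers it.
  have hinj : Set.InjOn (fun z : (Fin n → Fin m) × Fin m => Function.update z.1 i z.2)
      (({s | i ∈ F.guessedPhases alg s} : Finset (Fin n → Fin m)) ×ˢ
        (Finset.univ : Finset (Fin m)) : Finset _) := by
    rintro ⟨s, c⟩ hs ⟨s', c'⟩ hs' h
    simp only [Finset.coe_product, Set.mem_prod, Finset.mem_coe, Finset.mem_filter_univ] at hs hs'
    have hoff (j : Fin n) (hj : j ≠ i) : s j = s' j := by simpa [hj] using congrFun h j
    have hi : s i = s' i :=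
      F.letter_eq_of_mem_guessedPhases hw (fun j hj => hoff j hj.ne) hs.1 hs'.1
    refine Prod.ext (funext fun j => ?_) (by simpa using congrFun h i)
    rcases eq_or_ne j i with rfl | hj
    exacts [hi, hoff j hj]
  simpa only [Finset.card_product, Finset.card_univ, Fintype.card_fin] using
    Finset.card_le_card_of_injOn _ (fun _ _ => Finset.mem_univ _) hinj

theorem sum_card_guessedPhases_mul_le (hw : ∀ u x, 0 ≤ w u x) :
    (∑ s, (F.guessedPhases alg s).card) * m ≤ n * Fintype.card (Fin n → Fin m) := by
  have hswap : ∑ s, (F.guessedPhases alg s).card =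
      ∑ i, Finset.card {s | i ∈ F.guessedPhases alg s} := by
    simpa [Finset.bipartiteAbove, Finset.bipartiteBelow] using
      Finset.sum_card_bipartiteAbove_eq_sum_card_bipartiteBelow (s := Finset.univ)
        (t := Finset.univ) fun (s : Fin n → Fin m) i => i ∈ F.guessedPhases alg s
  calc (∑ s, (F.guessedPhases alg s).card) * m
      = ∑ i, Finset.card {s | i ∈ F.guessedPhases alg s} * m := by rw [hswap, Finset.sum_mul]
    _ ≤ ∑ _i : Fin n, Fintype.card (Fin n → Fin m) :=
        Finset.sum_le_sum fun i _ => F.card_filter_mem_guessedPhases_mul_le alg hw i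
    _ = n * Fintype.card (Fin n → Fin m) := by simp only [Finset.sum_const, Finset.card_univ,
        Fintype.card_fin, smul_eq_mul]

theorem sum_card_mul_le (hw : ∀ u x, 0 ≤ w u x) :
    (∑ s, (alg.A (F.toList s)).card) * m ≤ (n + m) * Fintype.card (Fin n → Fin m) := by
  calc (∑ s, (alg.A (F.toList s)).card) * m
      ≤ (∑ s, ((F.guessedPhases alg s).card + 1)) * m := by
        gcongr with s
        exact F.card_le_card_guessedPhases_add_one alg hw s
    _ = (∑ s, (F.guessedPhases alg s).card) * m + Fintype.card (Fin n → Fin m) * m := by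
        rw [Finset.sum_add_distrib, add_mul, Fintype.card_eq_sum_ones]
    _ ≤ (n + m) * Fintype.card (Fin n → Fin m) := by
        rw [add_mul, mul_comm m]
        exact Nat.add_le_add_right (F.sum_card_guessedPhases_mul_le alg hw) _

variable {alg}

theorem tsum_map_uniform_mul_card_le [NeZero m] (hw : ∀ u x, 0 ≤ w u x) :
    ∑' l, (PMF.uniformOfFintype (Fin n → Fin m)).map F.toList l * ((alg.A l).card : ℝ≥0∞) ≤
      n / m + 1 := by
  have hsum : (∑ s, ((alg.A (F.toList s)).card : ℝ≥0∞)) * m ≤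
      (n + m) * Fintype.card (Fin n → Fin m) := by
    exact_mod_cast F.sum_card_mul_le alg hw
  set N := (Fintype.card (Fin n → Fin m) : ℝ≥0∞) with hN
  have hm : (m : ℝ≥0∞) ≠ 0 := Nat.cast_ne_zero.2 (NeZero.ne m)
  have hN0 : N ≠ 0 := Nat.cast_ne_zero.2 Fintype.card_ne_zero
  rw [tsum_map_mul, tsum_fintype]
  simp only [PMF.uniformOfFintype_apply]
  rw [← Finset.mul_sum, ← hN, mul_comm, ← div_eq_mul_inv,
    ENNReal.div_le_iff hN0 (ENNReal.natCast_ne_top _)]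
  calc ∑ s, ((alg.A (F.toList s)).card : ℝ≥0∞)
      ≤ (n + m) * N / m :=
        (ENNReal.le_div_iff_mul_le (.inl hm) (.inl (ENNReal.natCast_ne_top m))).2 hsum
    _ = (n / m + 1) * N := by
        rw [ENNReal.mul_div_right_comm, ENNReal.add_div,
          ENNReal.div_self hm (ENNReal.natCast_ne_top m)]

end HiddenWordFamily

section SlackItems

variable {d k : ℕ} {ε : ℝ} {u v : {u : Finset (Fin d) // u.card = k}}

theorem Wslack_nonneg (hε : ε ≤ 1) (u : {u : Finset (Fin d) // u.card = k}) (x : Fin d) :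
    0 ≤ Wslack d k ε u x := by
  unfold Wslack
  split_ifs <;> linarith

theorem conflict_Wslack (hε : ε < 1 / 2) {x : Fin d} (hu : x ∈ u.1) (hv : x ∈ v.1) :
    Conflict (Wslack d k ε) u v := by
  refine ⟨x, ?_⟩
  rw [Wslack, Wslack, if_pos hu, if_pos hv]
  linarith

theorem sum_Wslack_le_one (hε : 0 ≤ ε) {ι : Type*} [Fintype ι]
    {v : ι → {u : Finset (Fin d) // u.card = k}}
    (hv : Pairwise fun i j => Disjoint (v i).1 (v j).1) (x : Fin d) :
    ∑ i, Wslack d k ε (v i) x ≤ 1 := by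
  unfold Wslack
  by_cases hx : ∃ i, x ∈ (v i).1
  · obtain ⟨i, hi⟩ := hx
    rw [Finset.sum_eq_single_of_mem i (Finset.mem_univ i) fun j _ hj =>
      if_neg fun hxj => Finset.disjoint_left.1 (hv hj) hxj hi, if_pos hi]
    linarith
  · push Not at hx
    rw [Finset.sum_eq_zero fun i _ => if_neg (hx i)]
    exact zero_le_one

end SlackItems

section Construction

variable {α : Type*} {n b r : ℕ} (code : α → Fin b → Bool) (s : Fin n → α) {c c' : α} {i j : Fin n}

/-- The slot `(i, t, β, j)`, for phases `i ≤ j`, is occupied by the item of letter `c` in phase `i`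
if `β` is bit `t` of `c`, and by the items of phase `j` if `β` is not bit `t` of the hidden letter
of phase `i`. Here `slot code s i c (j, t)` is the slot that the item of letter `c` in phase `i`
occupies for the phase `j` and the bit `t`. -/
def slot (i : Fin n) (c : α) (q : Fin n × Fin b) : Fin n × Fin b × Bool × Fin n :=
  if q.1 < i then (q.1, q.2, !code (s q.1) q.2, i) else (i, q.2, code c q.2, q.1)

theorem slot_injective (i : Fin n) (c : α) : Function.Injective (slot code s i c) := by
  rintro ⟨j, t⟩ ⟨j', t'⟩ h
  unfold slot at h
  grind

variable {code s} in
theorem slot_eq_slot (hij : i < j) {t : Fin b} (ht : code c t ≠ code (s i) t) :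
    slot code s j c' (i, t) = slot code s i c (j, t) := by
  simp only [slot, if_pos hij, if_neg hij.not_gt, Bool.eq_not.2 ht]

theorem slot_secret_ne_slot_secret (hij : i ≠ j) (q q' : Fin n × Fin b) :
    slot code s i (s i) q ≠ slot code s j (s j) q' := by
  unfold slot
  grind

variable (r) in
/-- The item of letter `c` in phase `i`: its slots, together with `r` elements shared by the items
of phase `i` alone. -/
def wordItem (i : Fin n) (c : α) : Finset ((Fin n × Fin b × Bool × Fin n) ⊕ (Fin n × Fin r)) :=
  (Finset.univ.image (slot code s i c)).disjSum ({i} ×ˢ Finset.univ)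

theorem card_wordItem (i : Fin n) (c : α) : (wordItem r code s i c).card = n * b + r := by
  rw [wordItem, Finset.card_disjSum, Finset.card_image_of_injective _ (slot_injective code s i c)]
  simp

variable {code s}

theorem wordItem_congr {s' : Fin n → α} (h : ∀ j < i, s j = s' j) (c : α) :
    wordItem r code s i c = wordItem r code s' i c := by
  have hslot : slot code s i c = slot code s' i c := by
    funext q
    unfold slot
    split_ifs with hq
    · rw [h _ hq]
    · rfl
  rw [wordItem, wordItem, hslot]

theorem inr_mem_wordItem (x : Fin r) : Sum.inr (i, x) ∈ wordItem r code s i c := by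
  simp [wordItem]

theorem exists_mem_wordItem_of_lt (hcode : Function.Injective code) (hij : i < j) (hc : c ≠ s i)
    (c' : α) : ∃ x, x ∈ wordItem r code s i c ∧ x ∈ wordItem r code s j c' := by
  obtain ⟨t, ht⟩ := Function.ne_iff.1 (hcode.ne hc)
  refine ⟨Sum.inl (slot code s i c (j, t)), ?_, ?_⟩
  · exact Finset.inl_mem_disjSum.2 (Finset.mem_image_of_mem _ (Finset.mem_univ _))
  · rw [← slot_eq_slot (c' := c') hij ht]
    exact Finset.inl_mem_disjSum.2 (Finset.mem_image_of_mem _ (Finset.mem_univ _))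

theorem disjoint_wordItem_secret (hij : i ≠ j) :
    Disjoint (wordItem r code s i (s i)) (wordItem r code s j (s j)) := by
  rw [Finset.disjoint_left]
  rintro (x | x) hi hj
  · obtain ⟨q, -, rfl⟩ := Finset.mem_image.1 (Finset.inl_mem_disjSum.1 hi)
    obtain ⟨q', -, hq⟩ := Finset.mem_image.1 (Finset.inl_mem_disjSum.1 hj)
    exact slot_secret_ne_slot_secret code s hij q q' hq.symm
  · simp only [wordItem, Finset.inr_mem_disjSum, Finset.mem_product, Finset.mem_singleton] at hi hj
    exact hij (hi.1.symm.trans hj.1)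

variable {d : ℕ}

variable (code s) in
/-- The item of letter `c` in phase `i`, carried along `φ` into the set of dimensions. -/
def embeddedItem (φ : (Fin n × Fin b × Bool × Fin n) ⊕ (Fin n × Fin r) ↪ Fin d) (i : Fin n)
    (c : α) : {u : Finset (Fin d) // u.card = n * b + r} :=
  ⟨(wordItem r code s i c).map φ, by rw [Finset.card_map, card_wordItem]⟩

/-- The hard family of items of slack `ε`, for the `m` letters written in binary by `code`. -/
def slackFamily {m : ℕ} [NeZero r] (code : Fin m ↪ (Fin b → Bool))
    (φ : (Fin n × Fin b × Bool × Fin n) ⊕ (Fin n × Fin r) ↪ Fin d) {ε : ℝ} (hε0 : 0 ≤ ε)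
    (hε1 : ε < 1 / 2) : HiddenWordFamily (Wslack d (n * b + r) ε) n m where
  item s := embeddedItem code s φ
  item_congr h c := Subtype.ext (congrArg (Finset.map φ) (wordItem_congr h c))
  conflict_of_ne _ _ _ _ _ := conflict_Wslack hε1
    (Finset.mem_map_of_mem φ (inr_mem_wordItem 0)) (Finset.mem_map_of_mem φ (inr_mem_wordItem 0))
  conflict_of_lt _ _ _ _ hij hc c' :=
    have ⟨_, hx, hx'⟩ := exists_mem_wordItem_of_lt code.injective hij hc c'
    conflict_Wslack hε1 (Finset.mem_map_of_mem φ hx) (Finset.mem_map_of_mem φ hx')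
  sum_secret_le_one _ := sum_Wslack_le_one hε0 fun _ _ hij =>
    (Finset.disjoint_map φ).2 (disjoint_wordItem_secret hij)

end Construction

theorem nonempty_hiddenWordFamily_Wslack {n m b k d : ℕ} (hm : m ≤ 2 ^ b) (hk : n * b < k)
    (hd : n * (n * b + k) ≤ d) {ε : ℝ} (hε0 : 0 ≤ ε) (hε1 : ε < 1 / 2) :
    Nonempty (HiddenWordFamily (Wslack d k ε) n m) := by
  obtain ⟨r, rfl⟩ := Nat.exists_eq_add_of_le hk.le
  have : NeZero r := ⟨by omega⟩
  obtain ⟨code⟩ : Nonempty (Fin m ↪ (Fin b → Bool)) :=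
    Function.Embedding.nonempty_of_card_le (by simpa using hm)
  obtain ⟨φ⟩ : Nonempty ((Fin n × Fin b × Bool × Fin n) ⊕ (Fin n × Fin r) ↪ Fin d) := by
    refine Function.Embedding.nonempty_of_card_le ?_
    simp only [Fintype.card_sum, Fintype.card_prod, Fintype.card_fin, Fintype.card_bool]
    linarith
  exact ⟨slackFamily code φ hε0 hε1⟩

theorem statement1_general {n m b k d : ℕ} [NeZero m] (hm : m ≤ 2 ^ b) (hk : n * b < k)
    (hd : n * (n * b + k) ≤ d) {ε : ℝ} (hε0 : 0 ≤ ε) (hε1 : ε < 1 / 2) :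
    ∃ μ : PMF (List {u : Finset (Fin d) // u.card = k}),
      μ.support.Finite ∧
      (∀ l ∈ μ.support, n ≤ OPT (Wslack d k ε) l) ∧
      (∀ alg : OnlineAlg (Wslack d k ε), ∑' l, μ l * ((alg.A l).card : ℝ≥0∞) ≤ n / m + 1) := by
  obtain ⟨F⟩ := nonempty_hiddenWordFamily_Wslack hm hk hd hε0 hε1
  refine ⟨(PMF.uniformOfFintype (Fin n → Fin m)).map F.toList, ?_, ?_, fun alg => ?_⟩
  · rw [PMF.support_map]
    exact (Set.toFinite _).image _
  · rw [PMF.support_map]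
    rintro _ ⟨s, -, rfl⟩
    exact F.le_OPT s
  · exact F.tsum_map_uniform_mul_card_le (Wslack_nonneg (by linarith))

/-- Hardness for randomized algorithms with slack: with `ℓ = 2^a`, sparsity
`k = 100·ℓ·log₂ℓ + 1` and `d = ℓ + 400·ℓ²·log₂ℓ` dimensions, there is a finitely
supported distribution over instances whose offline optimum is always at least `ℓ`,
while every deterministic online algorithm with free disposal keeps at most `6` items
in expectation. -/
theorem statement1 (a : ℕ) (ha : 4 ≤ a) (ε : ℝ) (hε0 : 0 < ε) (hε1 : ε < 1 / 2) :
    ∃ μ : PMF (List {u : Finset (Fin (2 ^ a + 400 * (2 ^ a) ^ 2 * a)) //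
        u.card = 100 * 2 ^ a * a + 1}),
      μ.support.Finite ∧
      (∀ l ∈ μ.support,
        2 ^ a ≤ OPT (Wslack (2 ^ a + 400 * (2 ^ a) ^ 2 * a) (100 * 2 ^ a * a + 1) ε) l) ∧
      (∀ alg : OnlineAlg (Wslack (2 ^ a + 400 * (2 ^ a) ^ 2 * a) (100 * 2 ^ a * a + 1) ε),
        ∑' l, μ l * ((alg.A l).card : ℝ≥0∞) ≤ 6) := by
  obtain ⟨μ, hfin, hopt, hcard⟩ := statement1_general (n := 2 ^ a) (m := 2 ^ a) (b := a)
    (k := 100 * 2 ^ a * a + 1) (d := 2 ^ a + 400 * (2 ^ a) ^ 2 * a) le_rfl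
    (by linarith [Nat.zero_le (2 ^ a * a)]) (by nlinarith) hε0.le hε1
  refine ⟨μ, hfin, hopt, fun alg => (hcard alg).trans ?_⟩
  calc ((2 ^ a : ℕ) / (2 ^ a : ℕ) + 1 : ℝ≥0∞) ≤ 1 + 1 := by gcongr; exact ENNReal.div_self_le_one
    _ ≤ 6 := by norm_num
end

section
/- Assume in addition that f is monotone, i.e., f(X) ≤ f(Y) whenever X ⊆ Y. Then for every subset S ⊆ {u_0, …, u_{n−1}} of the arrived items, f(S) ≤ f(∅) + ∑_{i : u_i ∈ B_n} v_i + ∑_{i : u_i ∈ S ∖ B_n} v_i. -/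
open scoped BigOperators

/-!
Since the items are distinct and `B 0 = ∅`, `u i` lies in the final set `B n` exactly when it is
accepted on arrival, so the marginal values of the items in `B n` telescope to `f (B n) - f ∅`.
Adding the items of `S \ B n` to `B n` one at a time increases `f`, by diminishing returns, by at
most the sum of their marginal values over the smaller sets `B i`. This bounds `f (S ∪ B n)`, hence
`f S` by monotonicity.
-/

/-- Submodularity of a function on a lattice with values in an ordered additive structure; for
finite sets, `⊔` and `⊓` are `∪` and `∩`. -/
def IsSubmodular {α M : Type*} [Lattice α] [Add M] [LE M] (f : α → M) : Prop :=
  ∀ x y : α, f (x ⊔ y) + f (x ⊓ y) ≤ f x + f y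

/-- The marginal value of adding the item `x` to the set `X`; it is `0` when `x ∈ X`. -/
def marginal {U G : Type*} [DecidableEq U] [Sub G] (f : Finset U → G) (x : U) (X : Finset U) : G :=
  f (insert x X) - f X

/-- The evolution of the set of accepted items in an online process: `B i` is the set held when
the item `u i` arrives, and the process either rejects `u i` or adds it. The initial set `B 0` is
arbitrary. -/
def IsAcceptanceProcess {U : Type*} [DecidableEq U] {n : ℕ} (u : Fin n → U)
    (B : Fin (n + 1) → Finset U) : Prop :=
  ∀ i : Fin n, B i.succ = B i.castSucc ∨ B i.succ = insert (u i) (B i.castSucc)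

namespace IsSubmodular

variable {U G : Type*} [DecidableEq U] [AddCommGroup G] [PartialOrder G] [IsOrderedAddMonoid G]
  {f : Finset U → G}

theorem marginal_le_marginal (hf : IsSubmodular f) {C D : Finset U} (hCD : C ⊆ D) {x : U}
    (hx : x ∉ D) : marginal f x D ≤ marginal f x C := by
  have hunion : insert x C ∪ D = insert x D := by
    rw [Finset.insert_union, Finset.union_eq_right.2 hCD]
  have hinter : insert x C ∩ D = C := by
    rw [Finset.insert_inter_of_notMem hx, Finset.inter_eq_left.2 hCD]
  have h := hf (insert x C) D
  rw [Finset.sup_eq_union, Finset.inf_eq_inter, hunion, hinter] at h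
  rwa [marginal, marginal, sub_le_sub_iff]

theorem map_union_image_le {ι : Type*} (hf : IsSubmodular f) {u : ι → U} {D : Finset U}
    {C : ι → Finset U} {T : Finset ι} (hu : Set.InjOn u T) (huD : ∀ i ∈ T, u i ∉ D)
    (hCD : ∀ i ∈ T, C i ⊆ D) :
    f (D ∪ T.image u) ≤ f D + ∑ i ∈ T, marginal f (u i) (C i) := by
  classical
  induction T using Finset.induction_on with
  | empty => simp
  | insert i T hi ih =>
    simp only [Finset.forall_mem_insert] at huD hCD
    rw [Finset.coe_insert, Set.injOn_insert (by exact_mod_cast hi)] at hu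
    have hnew : u i ∉ D ∪ T.image u := by
      rw [Finset.mem_union, not_or]
      exact ⟨huD.1, by exact_mod_cast hu.2⟩
    calc f (D ∪ (insert i T).image u)
        = marginal f (u i) (D ∪ T.image u) + f (D ∪ T.image u) := by
          rw [Finset.image_insert, Finset.union_insert, marginal, sub_add_cancel]
      _ ≤ marginal f (u i) (C i) + (f D + ∑ j ∈ T, marginal f (u j) (C j)) :=
          add_le_add
            (hf.marginal_le_marginal (hCD.1.trans Finset.subset_union_left) hnew)
            (ih hu.1 huD.2 hCD.2)
      _ = f D + ∑ j ∈ insert i T, marginal f (u j) (C j) := by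
          rw [Finset.sum_insert hi, add_left_comm]

end IsSubmodular

namespace IsAcceptanceProcess

variable {U : Type*} [DecidableEq U] {n : ℕ} {u : Fin n → U} {B : Fin (n + 1) → Finset U}

theorem monotone (hB : IsAcceptanceProcess u B) : Monotone B :=
  Fin.monotone_iff_le_succ.2 fun i =>
    (hB i).elim Eq.ge fun h => h ▸ Finset.subset_insert (u i) (B i.castSucc)

theorem mem_succ_of_mem (hB : IsAcceptanceProcess u B) (hu : Function.Injective u) {i : Fin n}
    {j : Fin (n + 1)} (hj : u i ∈ B j) : u i ∈ B i.succ := by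
  induction j using Fin.induction with
  | zero => exact hB.monotone (Fin.zero_le _) hj
  | succ k ih =>
    rcases hB k with hreject | haccept
    · exact ih (hreject ▸ hj)
    · rcases Finset.mem_insert.1 (haccept ▸ hj) with heq | hmem
      · exact hu heq ▸ hj
      · exact ih hmem

theorem succ_eq_ite (hB : IsAcceptanceProcess u B) (hu : Function.Injective u) (i : Fin n) :
    B i.succ = if u i ∈ B (Fin.last n) then insert (u i) (B i.castSucc) else B i.castSucc := by
  split_ifs with hlast
  · have hmem : u i ∈ B i.succ := hB.mem_succ_of_mem hu hlast
    rcases hB i with hreject | haccept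
    · rw [hreject, Finset.insert_eq_of_mem (hreject ▸ hmem)]
    · exact haccept
  · refine (hB i).resolve_right fun haccept => hlast ?_
    exact hB.monotone (Fin.le_last _) (haccept ▸ Finset.mem_insert_self (u i) (B i.castSucc))

theorem map_last_eq_add_sum_marginal {G : Type*} [AddCommGroup G] (f : Finset U → G)
    (hB : IsAcceptanceProcess u B) (hu : Function.Injective u) :
    f (B (Fin.last n)) = f (B 0) +
      ∑ i ∈ Finset.univ.filter (fun i : Fin n => u i ∈ B (Fin.last n)),
        marginal f (u i) (B i.castSucc) := by
  have htelescope : f (B (Fin.last n)) =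
      f (B 0) + ∑ i : Fin n, (f (B i.succ) - f (B i.castSucc)) := by
    have h := (Fin.sum_univ_castSucc fun i => f (B i)).symm.trans (Fin.sum_univ_succ _)
    rw [Finset.sum_sub_distrib, ← add_sub_assoc, ← h, add_sub_cancel_left]
  rw [htelescope, Finset.sum_filter]
  refine congrArg (f (B 0) + ·) (Finset.sum_congr rfl fun i _ => ?_)
  rw [hB.succ_eq_ite hu i]
  split_ifs
  · rfl
  · exact sub_self _

end IsAcceptanceProcess

theorem statement6_general {U G : Type*} [DecidableEq U] [AddCommGroup G] [PartialOrder G]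
    [IsOrderedAddMonoid G] {f : Finset U → G} (hf : IsSubmodular f) {n : ℕ} {u : Fin n → U}
    (hu : Function.Injective u) {B : Fin (n + 1) → Finset U} (hB : IsAcceptanceProcess u B)
    {S : Finset U} (hS : S ⊆ Finset.univ.image u) :
    f (S ∪ B (Fin.last n)) ≤ f (B 0) +
      ∑ i ∈ Finset.univ.filter (fun i : Fin n => u i ∈ B (Fin.last n)),
        marginal f (u i) (B i.castSucc) +
      ∑ i ∈ Finset.univ.filter (fun i : Fin n => u i ∈ S \ B (Fin.last n)),
        marginal f (u i) (B i.castSucc) := by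
  set missed := Finset.univ.filter (fun i : Fin n => u i ∈ S \ B (Fin.last n))
  have himage : missed.image u = S \ B (Fin.last n) := by
    rw [← Finset.inter_eq_right.2 (Finset.sdiff_subset.trans hS), ← Finset.filter_mem_eq_inter,
      Finset.filter_image]
  have hmissed : ∀ i ∈ missed, u i ∉ B (Fin.last n) := fun i hi =>
    (Finset.mem_sdiff.1 (Finset.mem_filter.1 hi).2).2
  rw [← hB.map_last_eq_add_sum_marginal f hu, Finset.union_comm,
    ← Finset.union_sdiff_self_eq_union, ← himage]
  exact hf.map_union_image_le hu.injOn hmissed fun i _ => hB.monotone (Fin.le_last _)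

/-- If `f` is submodular and monotone, items `u 0, …, u (n-1)` arrive in order, `B i` is
the set of items ever accepted before the arrival of `u i` (so `B (i+1)` is either `B i`
or `B i ∪ {u i}` with `u i ∉ B i`), and `v i = f(B i ∪ {u i}) − f(B i)` is the marginal
value of `u i` upon arrival, then for every subset `S` of the arrived items,
`f S ≤ f ∅ + ∑_{i : u i ∈ B n} v i + ∑_{i : u i ∈ S ∖ B n} v i`. -/
theorem statement6 {U : Type*} [DecidableEq U] (f : Finset U → ℝ)
    (hsub : ∀ X Y : Finset U, f (X ∪ Y) + f (X ∩ Y) ≤ f X + f Y)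
    (hmono : ∀ X Y : Finset U, X ⊆ Y → f X ≤ f Y)
    (n : ℕ) (u : Fin n → U) (hinj : Function.Injective u)
    (B : Fin (n + 1) → Finset U) (hB0 : B 0 = ∅)
    (hstep : ∀ i : Fin n, B i.succ = B i.castSucc ∨
      B i.succ = insert (u i) (B i.castSucc))
    (hnot : ∀ i : Fin n, u i ∉ B i.castSucc)
    (S : Finset U) (hS : S ⊆ Finset.univ.image u) :
    f S ≤ f ∅ +
      ∑ i ∈ Finset.univ.filter (fun i : Fin n => u i ∈ B (Fin.last n)),
        (f (insert (u i) (B i.castSucc)) - f (B i.castSucc)) +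
      ∑ i ∈ Finset.univ.filter (fun i : Fin n => u i ∈ S \ B (Fin.last n)),
        (f (insert (u i) (B i.castSucc)) - f (B i.castSucc)) :=
  (hmono _ _ Finset.subset_union_left).trans (hB0 ▸ statement6_general hsub hinj hstep hS)
end

section
/- Let a ≥ 1 be an integer and set ℓ = 2^a and r = 100 · ℓ · a. Then for every natural number m with m ≤ 4 · r · ℓ, we have ℓ^7 · C(m − r, r) ≤ C(m, r), where m − r denotes truncated subtraction in ℕ and C(·,·) is the binomial coefficient. (Equivalently: if a uniformly random r-element subset is drawn from a ground set of size m ≤ 4rℓ, the probability that it is disjoint from a fixed r-element subset of the ground set is at most ℓ^{−7}. This is the per-pair estimate behind the lemma that, in the randomized hard instance with sparsity k = r + 1 = 100ℓ log₂ℓ + 1, the probability that some two bad items are non-conflicting is at most 1/ℓ².) -/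
/-!
For `x ≤ m`, comparing descending factorials factor by factor gives
`C(x, s) / C(m, s) ≤ (x / m) ^ s`. If `m ≤ (n + 1) * r` and `x = m - r`, then
`m / x ≥ 1 + 1 / n`, so Bernoulli's inequality gives `(x / m) ^ n ≤ 1 / 2`: every block of `n`
chosen elements halves the probability of avoiding a fixed `r`-set. For
`n = 4ℓ` and `s = r = 100ℓa` there are `25a` blocks, while the factor `ℓ⁻⁷` needs only `7a`.
-/

lemma two_mul_pow_le_add_pow {R : Type*} [CommSemiring R] [LinearOrder R] [IsOrderedRing R]
    [ExistsAddOfLE R] {x y : R} {n : ℕ} (hn : n ≠ 0) (hx : 0 ≤ x) (hy : 0 ≤ y)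
    (hxy : x ≤ n * y) : 2 * x ^ n ≤ (x + y) ^ n :=
  calc 2 * x ^ n = x ^ n + x ^ (n - 1) * x := by rw [pow_sub_one_mul hn, two_mul]
    _ ≤ x ^ n + x ^ (n - 1) * (n * y) := by gcongr
    _ = x ^ n + n * x ^ (n - 1) * y := by ring
    _ ≤ (x + y) ^ n := pow_add_mul_le_add_pow hx (add_nonneg (mul_nonneg zero_le_two hx) hy) n

lemma pow_mul_pow_le_pow_of_mul_pow_le_pow {R : Type*} [CommSemiring R] [PartialOrder R]
    [IsOrderedRing R] {c x y : R} {n t s : ℕ} (hc : 0 ≤ c) (hx : 0 ≤ x) (hxy : x ≤ y)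
    (h : c * x ^ n ≤ y ^ n) (hs : n * t ≤ s) : c ^ t * x ^ s ≤ y ^ s := by
  obtain ⟨u, rfl⟩ := Nat.exists_eq_add_of_le hs
  have hy : 0 ≤ y := hx.trans hxy
  calc c ^ t * x ^ (n * t + u) = (c * x ^ n) ^ t * x ^ u := by ring
    _ ≤ (y ^ n) ^ t * y ^ u := by gcongr
    _ = y ^ (n * t + u) := by ring

lemma pow_mul_descFactorial_le_pow_mul_descFactorial {x m : ℕ} (h : x ≤ m) (s : ℕ) :
    m ^ s * x.descFactorial s ≤ x ^ s * m.descFactorial s := by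
  have factor_le (i : ℕ) : m * (x - i) ≤ x * (m - i) := by
    rw [Nat.mul_sub, Nat.mul_sub, mul_comm x m]
    gcongr
  simpa only [Nat.descFactorial_eq_prod_range, Finset.prod_mul_distrib, Finset.prod_const,
    Finset.card_range] using Finset.prod_le_prod' fun i (_ : i ∈ Finset.range s) => factor_le i

lemma pow_mul_choose_le_pow_mul_choose {x m : ℕ} (h : x ≤ m) (s : ℕ) :
    m ^ s * x.choose s ≤ x ^ s * m.choose s := by
  have := pow_mul_descFactorial_le_pow_mul_descFactorial h s
  rw [Nat.descFactorial_eq_factorial_mul_choose, Nat.descFactorial_eq_factorial_mul_choose,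
    mul_left_comm, mul_left_comm (x ^ s)] at this
  exact Nat.le_of_mul_le_mul_left this s.factorial_pos

theorem statement9_general {m n r s t : ℕ} (hn : n ≠ 0) (hm : m ≤ (n + 1) * r)
    (hs : n * t ≤ s) : 2 ^ t * (m - r).choose s ≤ m.choose s := by
  rcases (m - r).eq_zero_or_pos with hx | hx
  · rcases s.eq_zero_or_pos with rfl | hs_pos
    · have ht : t = 0 := by simpa [hn] using hs
      simp [ht]
    · simp [hx, Nat.choose_eq_zero_of_lt hs_pos]
  have hrm : m - r + r = m := by lia
  have halving : 2 * (m - r) ^ n ≤ m ^ n := by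
    have hxr : m - r ≤ n * r := by rw [add_one_mul] at hm; lia
    simpa only [hrm] using two_mul_pow_le_add_pow hn (Nat.zero_le _) (Nat.zero_le r) hxr
  have two_pow_mul_le : 2 ^ t * (m - r) ^ s ≤ m ^ s :=
    pow_mul_pow_le_pow_of_mul_pow_le_pow zero_le_two (Nat.zero_le _) (m.sub_le r) halving hs
  have hm_pos : 0 < m ^ s := Nat.pow_pos (hx.trans_le (m.sub_le r))
  refine Nat.le_of_mul_le_mul_left ?_ hm_pos
  calc m ^ s * (2 ^ t * (m - r).choose s) = 2 ^ t * (m ^ s * (m - r).choose s) := by ring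
    _ ≤ 2 ^ t * ((m - r) ^ s * m.choose s) :=
      Nat.mul_le_mul_left _ (pow_mul_choose_le_pow_mul_choose (m.sub_le r) s)
    _ = 2 ^ t * (m - r) ^ s * m.choose s := by ring
    _ ≤ m ^ s * m.choose s := Nat.mul_le_mul_right _ two_pow_mul_le

/-- With `ℓ = 2^a` and `r = 100·ℓ·a = 100·ℓ·log₂ℓ`: for every `m ≤ 4·r·ℓ` we have
`ℓ^7 · C(m − r, r) ≤ C(m, r)`, i.e. a uniformly random `r`-subset of an `m`-set is
disjoint from a fixed `r`-subset with probability at most `ℓ^{-7}`. -/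
theorem statement9 (a : ℕ) (ha : 1 ≤ a) (m : ℕ)
    (hm : m ≤ 4 * (100 * 2 ^ a * a) * 2 ^ a) :
    (2 ^ a) ^ 7 * Nat.choose (m - 100 * 2 ^ a * a) (100 * 2 ^ a * a) ≤
      Nat.choose m (100 * 2 ^ a * a) := by
  rw [← pow_mul]
  exact statement9_general (n := 4 * 2 ^ a) (by positivity)
    (by linarith [Nat.zero_le (100 * 2 ^ a * a)]) (by lia)
end
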